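/- Suppose r is even. Then for each sign ε ∈ {+1,−1} the following two identities hold in Cl ⊗ Cl: p_{ε,−ε}·I_r = 0, and p_{εε}·( I_{r+2} − r(r^2−1)(r+2)·I_{r−2} ) = 0. These are the characteristic identities of the split Casimir operator of so_{2r} restricted to the tensor products of spinor representations of opposite and equal chirality, respectively. -/

import Mathlib

open scoped TensorProduct

noncomputable section

/-- The quadratic form `x₁² + ⋯ + x_{2r}²` on `ℂ^{2r}`. -/
def Qf (r : ℕ) : QuadraticForm ℂ (Fin (2*r) → ℂ) :=
  QuadraticMap.weightedSumSquares ℂ (fun _ : Fin (2*r) => (1:ℂ))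

/-- The Clifford algebra of `Qf r`. -/
abbrev Cl (r : ℕ) := CliffordAlgebra (Qf r)

/-- The generators `Γ_i`. -/
def Γgen (r : ℕ) (i : Fin (2*r)) : Cl r :=
  CliffordAlgebra.ι (Qf r) (Pi.single i 1)

/-- The antisymmetrised products `Γ_{[i₁…i_k]}`. -/
def Γbr (r k : ℕ) (i : Fin k → Fin (2*r)) : Cl r :=
  ((k.factorial : ℂ))⁻¹ •
    ∑ σ : Equiv.Perm (Fin k),
      ((Equiv.Perm.sign σ : ℤ) : ℂ) • (List.ofFn fun j => Γgen r (i (σ j))).prod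

/-- The invariants `I_k ∈ Cl ⊗ Cl`. -/
def Ik (r k : ℕ) : Cl r ⊗[ℂ] Cl r :=
  ∑ i : Fin k → Fin (2*r), (Γbr r k i) ⊗ₜ[ℂ] (Γbr r k i)

/-- The split Casimir element `Ĉ = −I₂/(16(2r−2))`. -/
def sC (r : ℕ) : Cl r ⊗[ℂ] Cl r := (-(16*(2*(r:ℂ)-2))⁻¹) • Ik r 2

/-- The top element `Γ_{2r+1} = (−i)^r Γ₁⋯Γ_{2r}`. -/
def Γtop (r : ℕ) : Cl r :=
  ((-Complex.I)^r) • (List.ofFn fun i : Fin (2*r) => Γgen r i).prod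

/-- The chirality projector `p_ε = (1 + ε Γ_{2r+1})/2`. -/
def pCh (r : ℕ) (ε : ℂ) : Cl r := (2:ℂ)⁻¹ • (1 + ε • Γtop r)

/-- The chirality projectors `p_{εε'} = p_ε ⊗ p_{ε'}`. -/
def ppCh (r : ℕ) (ε ε' : ℂ) : Cl r ⊗[ℂ] Cl r := (pCh r ε) ⊗ₜ[ℂ] (pCh r ε')

/-- The eigenvalues `c_k = (2k(2r−k) − r(2r−1))/(16(r−1))`. -/
def cEv (r k : ℕ) : ℂ :=
  (2*(k:ℂ)*(2*(r:ℂ)-(k:ℂ)) - (r:ℂ)*(2*(r:ℂ)-1)) / (16*((r:ℂ)-1))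

/-- The spectral projectors `P_k = Π_{j≠k} (Ĉ − c_j)/(c_k − c_j)`. -/
def Pk (r k : ℕ) : Cl r ⊗[ℂ] Cl r :=
  (((List.range (r+1)).filter (fun j => j ≠ k)).map
    (fun j => (cEv r k - cEv r j)⁻¹ • (sC r - cEv r j • 1))).prod

/-- `P_r^S = (p_{++} + p_{−−})·P_r`. -/
def PrS (r : ℕ) : Cl r ⊗[ℂ] Cl r := (ppCh r 1 1 + ppCh r (-1) (-1)) * Pk r r

/-- The ascending factorial `a_k(u) = (u/2)(u/2+1)⋯(u/2+k−1)`. -/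
def asc (u : ℂ) (k : ℕ) : ℂ := ∏ j ∈ Finset.range k, (u/2 + (j:ℂ))

/-!
The elements `T_i = Γ_i ⊗ Γ_i` commute and square to `1`, because the two signs from anticommuting
both tensor factors cancel. As the antisymmetrised product of distinct generators is their ordinary
product, `I_k / k!` is the `k`-th elementary symmetric polynomial in the `T_i`, while
`Γ_{2r+1} ⊗ Γ_{2r+1} = (-1)^r ∏ T_i`. Multiplication by `∏ T_i` cancels the repeated factors and so
exchanges a subset with its complement: it takes `I_k / k!` to `I_{2r-k} / (2r-k)!`. On the image of
`p_{εε'}`, multiplication by `Γ_{2r+1} ⊗ Γ_{2r+1}` is the scalar `εε'`, which gives the identities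
at `k = r` and at `k = r - 2`.
-/

open scoped Function

section AntiCommute

variable {A : Type*} [Ring A]

/-- Two ring elements anticommute if `a * b = -(b * a)`; the counterpart of `Commute`. -/
def AntiCommute (a b : A) : Prop := a * b = -(b * a)

theorem AntiCommute.symm {a b : A} (h : AntiCommute a b) : AntiCommute b a := by
  rw [AntiCommute, h, neg_neg]

theorem list_prod_mul_of_antiCommute {l : List A} {a : A} (h : ∀ b ∈ l, AntiCommute b a) :
    l.prod * a = (-1) ^ l.length * (a * l.prod) := by
  induction l with
  | nil => simp
  | cons b l ih =>
    rw [List.forall_mem_cons] at h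
    calc (b :: l).prod * a = b * (l.prod * a) := by rw [List.prod_cons, mul_assoc]
      _ = (-1) ^ l.length * (b * a * l.prod) := by
        rw [ih h.2, ((Commute.neg_one_right b).pow_right _).left_comm, mul_assoc]
      _ = (-1) ^ (b :: l).length * (a * (b :: l).prod) := by
        rw [h.1, List.length_cons, List.prod_cons, pow_succ]
        noncomm_ring

theorem list_prod_mul_self_of_antiCommute {l : List A} (hanti : l.Pairwise AntiCommute)
    (hsq : ∀ a ∈ l, a * a = 1) : l.prod * l.prod = (-1) ^ l.length.choose 2 := by
  induction l with
  | nil => simp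
  | cons a l ih =>
    rw [List.pairwise_cons] at hanti
    rw [List.forall_mem_cons] at hsq
    calc (a :: l).prod * (a :: l).prod = a * (l.prod * a) * l.prod := by
          simp only [List.prod_cons, mul_assoc]
      _ = (-1) ^ l.length * (a * a * (l.prod * l.prod)) := by
        rw [list_prod_mul_of_antiCommute fun b hb => (hanti.1 b hb).symm,
          ((Commute.neg_one_right a).pow_right _).left_comm]
        simp only [mul_assoc]
      _ = (-1) ^ (a :: l).length.choose 2 := by
        rw [hsq.1, one_mul, ih hanti.2 hsq.2, ← pow_add, List.length_cons,
          Nat.choose_succ_succ' l.length 1, Nat.choose_one_right]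

theorem prod_ofFn_comp_swap_castSucc_succ {n : ℕ} {g : Fin (n + 1) → A}
    (hg : Pairwise (AntiCommute on g)) (i : Fin n) :
    (List.ofFn fun j => g (Equiv.swap i.castSucc i.succ j)).prod = -(List.ofFn g).prod := by
  induction n with
  | zero => exact i.elim0
  | succ n ih =>
    cases i using Fin.cases with
    | zero =>
      have hfix (j : Fin n) : Equiv.swap (0 : Fin (n + 2)) 1 j.succ.succ = j.succ.succ :=
        Equiv.swap_apply_of_ne_of_ne (Fin.succ_ne_zero _) (Fin.succ_succ_ne_one j)
      have h10 : g 1 * g 0 = -(g 0 * g 1) := hg (by simp)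
      simp only [List.ofFn_succ, List.prod_cons, Fin.castSucc_zero, Fin.succ_zero_eq_one,
        Equiv.swap_apply_left, Equiv.swap_apply_right, hfix, ← mul_assoc, h10, neg_mul]
    | succ i =>
      have hzero : Equiv.swap i.succ.castSucc i.succ.succ 0 = 0 :=
        Equiv.swap_apply_of_ne_of_ne (by simp [Fin.ext_iff]) (Fin.succ_ne_zero _).symm
      have hsucc (j : Fin (n + 1)) : Equiv.swap i.succ.castSucc i.succ.succ j.succ =
          (Equiv.swap i.castSucc i.succ j).succ :=
        (Fin.succ_injective (n + 1)).swap_apply i.castSucc i.succ j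
      have htail : Pairwise (AntiCommute on fun j : Fin (n + 1) => g j.succ) :=
        hg.comp_of_injective (Fin.succ_injective _)
      simp only [List.ofFn_succ (n := n + 1), List.prod_cons, hzero, hsucc, ih htail, mul_neg]

theorem prod_ofFn_comp_perm {n : ℕ} {g : Fin n → A}
    (hg : Pairwise (AntiCommute on g)) (σ : Equiv.Perm (Fin n)) :
    (List.ofFn fun j => g (σ j)).prod = Equiv.Perm.sign σ • (List.ofFn g).prod := by
  cases n with
  | zero => simp [Subsingleton.elim σ 1]
  | succ n =>
    have hσ : σ ∈ Submonoid.closure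
        (Set.range fun i : Fin n => Equiv.swap i.castSucc i.succ) := by
      rw [Equiv.Perm.mclosure_swap_castSucc_succ]
      exact Submonoid.mem_top σ
    induction hσ using Submonoid.closure_induction generalizing g with
    | mem τ hτ =>
      obtain ⟨i, rfl⟩ := hτ
      rw [prod_ofFn_comp_swap_castSucc_succ hg i, Equiv.Perm.sign_swap Fin.castSucc_lt_succ.ne,
        Units.neg_smul, one_smul]
    | one => simp
    | mul σ τ _ _ ihσ ihτ =>
      have hgσ : Pairwise (AntiCommute on fun j => g (σ j)) := hg.comp_of_injective σ.injective
      simp only [Equiv.Perm.mul_apply]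
      rw [ihτ hgσ, ihσ hg, smul_smul, map_mul, mul_comm]

theorem alternatization_mkPiAlgebraFin_of_antiCommute {R : Type*} [CommSemiring R] [Algebra R A]
    {n : ℕ} {g : Fin n → A} (hg : Pairwise (AntiCommute on g)) :
    MultilinearMap.alternatization (MultilinearMap.mkPiAlgebraFin R n A) g =
      n.factorial • (List.ofFn g).prod := by
  simp only [MultilinearMap.alternatization_apply, MultilinearMap.domDomCongr_apply,
    MultilinearMap.mkPiAlgebraFin_apply, prod_ofFn_comp_perm hg, smul_smul, Int.units_mul_self,
    one_smul, Finset.sum_const, Finset.card_univ, Fintype.card_perm, Fintype.card_fin]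

end AntiCommute

section TensorSquare

/-- The multiplicative map `a ↦ a ⊗ a`. -/
def tensorSq (R A : Type*) [CommSemiring R] [Semiring A] [Algebra R A] : A →* A ⊗[R] A where
  toFun a := a ⊗ₜ a
  map_one' := rfl
  map_mul' a b := (Algebra.TensorProduct.tmul_mul_tmul a b a b).symm

theorem tensorSq_apply {R A : Type*} [CommSemiring R] [Semiring A] [Algebra R A] (a : A) :
    tensorSq R A a = a ⊗ₜ a :=
  rfl

variable {R A : Type*} [CommRing R] [Ring A] [Algebra R A]

theorem tensorSq_neg (a : A) : tensorSq R A (-a) = tensorSq R A a := by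
  rw [tensorSq_apply, tensorSq_apply, TensorProduct.neg_tmul, TensorProduct.tmul_neg, neg_neg]

theorem AntiCommute.commute_tensorSq {a b : A} (h : AntiCommute a b) :
    Commute (tensorSq R A a) (tensorSq R A b) := by
  rw [Commute, SemiconjBy, ← map_mul, ← map_mul, h, tensorSq_neg]

end TensorSquare

section CommutingFamily

variable {ι : Type*}

/-- The product over `S` of a family of pairwise commuting elements. In contrast to
`Finset.noncommProd`, the commutation proof does not depend on `S`, so that `S` can be rewritten. -/
def commProd {M : Type*} [Monoid M] {T : ι → M} (hT : Pairwise (Commute on T)) (S : Finset ι) : M :=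
  S.noncommProd T (hT.set_pairwise _)

variable {M : Type*} [Monoid M] {T : ι → M} (hT : Pairwise (Commute on T))

theorem list_prod_map_eq_commProd [DecidableEq ι] {l : List ι} (hl : l.Nodup) :
    (l.map T).prod = commProd hT l.toFinset :=
  (Finset.noncommProd_toFinset l T _ hl).symm

theorem commProd_union [DecidableEq ι] {S S' : Finset ι} (h : Disjoint S S') :
    commProd hT (S ∪ S') = commProd hT S * commProd hT S' :=
  Finset.noncommProd_union_of_disjoint h T (hT.set_pairwise _)

variable {hT}

theorem commProd_mul_self (hsq : ∀ i, T i * T i = 1) (S : Finset ι) :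
    commProd hT S * commProd hT S = 1 := by
  rw [commProd, ← Finset.noncommProd_mul_distrib T T _ _ (hT.set_pairwise _),
    Finset.noncommProd_eq_pow_card S (T * T) _ 1 fun i _ => hsq i, one_pow]

theorem commProd_univ_mul [Fintype ι] [DecidableEq ι] (hsq : ∀ i, T i * T i = 1) (S : Finset ι) :
    commProd hT Finset.univ * commProd hT S = commProd hT Sᶜ := by
  rw [← Finset.union_compl S, Finset.union_comm, commProd_union hT disjoint_compl_left, mul_assoc,
    commProd_mul_self hsq, mul_one]

end CommutingFamily

section ElementarySymmetric

variable {ι M : Type*} [Fintype ι] [Semiring M] {T : ι → M}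

/-- The elementary symmetric polynomial of degree `k` in a finite family of pairwise commuting
elements of a possibly noncommutative semiring, where `MvPolynomial.esymm` cannot be evaluated. -/
def noncommEsymm (hT : Pairwise (Commute on T)) (k : ℕ) : M :=
  ∑ S ∈ Finset.univ.powersetCard k, commProd hT S

theorem commProd_univ_mul_noncommEsymm {hT : Pairwise (Commute on T)} (hsq : ∀ i, T i * T i = 1)
    {k l : ℕ} (hkl : k + l = Fintype.card ι) :
    commProd hT Finset.univ * noncommEsymm hT k = noncommEsymm hT l := by
  classical
  rw [noncommEsymm, noncommEsymm, Finset.mul_sum]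
  refine Finset.sum_bij' (fun S _ => Sᶜ) (fun S _ => Sᶜ) ?_ ?_ (fun S _ => compl_compl S)
    (fun S _ => compl_compl S) (fun S _ => commProd_univ_mul hsq S)
  all_goals
    intro S hS
    rw [Finset.mem_powersetCard_univ] at hS ⊢
    rw [Finset.card_compl]
    omega

end ElementarySymmetric

section InjectiveFunctions

variable {κ α : Type*} [Fintype κ] [DecidableEq κ] [Fintype α] [DecidableEq α]

theorem card_filter_injective_image_eq {S : Finset α} (hS : S.card = Fintype.card κ) :
    (Finset.univ.filter fun i : κ → α =>
      Function.Injective i ∧ Finset.univ.image i = S).card = (Fintype.card κ).factorial := by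
  have e₀ : κ ≃ S := Fintype.equivOfCardEq (by rw [Fintype.card_coe, hS])
  rw [← Fintype.card_equiv e₀, ← Finset.card_univ, eq_comm]
  refine Finset.card_bij (fun e _ j => (e j : α)) (fun e _ => ?_)
    (fun e _ e' _ h => Equiv.ext fun j => Subtype.ext (congrFun h j)) fun i hi => ?_
  · have himage : Finset.univ.image (fun j => (e j : α)) = S := by
      ext x
      simp [e.exists_congr_left]
    exact Finset.mem_filter_univ _ |>.2 ⟨Subtype.val_injective.comp e.injective, himage⟩
  · obtain ⟨hinj, rfl⟩ := (Finset.mem_filter_univ _).1 hi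
    let f : κ → Finset.univ.image i := fun j => ⟨i j, Finset.mem_image_of_mem i (Finset.mem_univ j)⟩
    have hf : Function.Injective f := fun a b hab => hinj (congrArg Subtype.val hab)
    exact ⟨Equiv.ofBijective f ((Fintype.bijective_iff_injective_and_card f).2
      ⟨hf, Fintype.card_congr e₀⟩), Finset.mem_univ _, rfl⟩

theorem sum_injective_eq_factorial_smul_sum_powersetCard {M : Type*} [AddCommMonoid M]
    (F : Finset α → M) :
    ∑ i : κ → α with Function.Injective i, F (Finset.univ.image i) =
      (Fintype.card κ).factorial • ∑ S ∈ Finset.univ.powersetCard (Fintype.card κ), F S := by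
  have hmaps : ∀ i ∈ Finset.univ.filter fun i : κ → α => Function.Injective i,
      Finset.univ.image i ∈ Finset.univ.powersetCard (Fintype.card κ) := fun i hi => by
    rw [Finset.mem_powersetCard_univ,
      Finset.card_image_of_injective _ ((Finset.mem_filter_univ i).1 hi), Finset.card_univ]
  rw [← Finset.sum_fiberwise_of_maps_to hmaps, Finset.smul_sum]
  refine Finset.sum_congr rfl fun S hS => ?_
  have hfiber : ∀ i ∈ Finset.univ.filter (fun i : κ → α => Function.Injective i) |>.filter
      (fun i => Finset.univ.image i = S), F (Finset.univ.image i) = F S :=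
    fun i hi => congrArg F (Finset.mem_filter.1 hi).2
  rw [Finset.sum_congr rfl hfiber, Finset.sum_const, Finset.filter_filter,
    card_filter_injective_image_eq (Finset.mem_powersetCard_univ.1 hS)]

end InjectiveFunctions

section Generators

variable (r : ℕ)

theorem Γgen_mul_self (i : Fin (2 * r)) : Γgen r i * Γgen r i = 1 := by
  have hQ : Qf r (Pi.single i 1) = 1 := by
    simp [Qf, QuadraticMap.weightedSumSquares_apply, Pi.single_apply]
  rw [Γgen, CliffordAlgebra.ι_sq_scalar, hQ, map_one]

theorem isOrtho_Qf_single {i j : Fin (2 * r)} (hij : i ≠ j) :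
    (Qf r).IsOrtho (Pi.single i 1) (Pi.single j 1) := by
  simp only [QuadraticMap.isOrtho_def, Qf, QuadraticMap.weightedSumSquares_apply, Pi.add_apply,
    one_smul, ← Finset.sum_add_distrib]
  refine Finset.sum_congr rfl fun k _ => ?_
  rcases eq_or_ne k i with rfl | hki
  · simp [hij]
  · simp [hki]

theorem pairwise_antiCommute_Γgen :
    Pairwise (AntiCommute on Γgen r) :=
  fun _ _ hij => CliffordAlgebra.ι_mul_ι_comm_of_isOrtho (isOrtho_Qf_single r hij)

theorem Γbr_eq_alternatization (k : ℕ) (i : Fin k → Fin (2 * r)) :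
    Γbr r k i = (k.factorial : ℂ)⁻¹ •
      MultilinearMap.alternatization (MultilinearMap.mkPiAlgebraFin ℂ k (Cl r))
        (fun j => Γgen r (i j)) := by
  simp only [Γbr, MultilinearMap.alternatization_apply, MultilinearMap.domDomCongr_apply,
    MultilinearMap.mkPiAlgebraFin_apply, Int.cast_smul_eq_zsmul, Units.smul_def]

theorem Γbr_of_not_injective {k : ℕ} {i : Fin k → Fin (2 * r)} (hi : ¬ Function.Injective i) :
    Γbr r k i = 0 := by
  have hΓ : ¬ Function.Injective fun j => Γgen r (i j) := fun h =>
    hi (Function.Injective.of_comp (f := Γgen r) h)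
  rw [Γbr_eq_alternatization, AlternatingMap.map_eq_zero_of_not_injective _ _ hΓ, smul_zero]

theorem Γbr_of_injective {k : ℕ} {i : Fin k → Fin (2 * r)} (hi : Function.Injective i) :
    Γbr r k i = (List.ofFn fun j => Γgen r (i j)).prod := by
  have hanti : Pairwise (AntiCommute on fun j => Γgen r (i j)) :=
    (pairwise_antiCommute_Γgen r).comp_of_injective hi
  rw [Γbr_eq_alternatization, alternatization_mkPiAlgebraFin_of_antiCommute hanti,
    ← Nat.cast_smul_eq_nsmul ℂ, inv_smul_smul₀ (Nat.cast_ne_zero.2 k.factorial_ne_zero)]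

end Generators

section Invariants

variable (r : ℕ)

/-- The commuting involutions `T_i = Γ_i ⊗ Γ_i`. -/
def Γsq (i : Fin (2 * r)) : Cl r ⊗[ℂ] Cl r := tensorSq ℂ (Cl r) (Γgen r i)

theorem pairwise_commute_Γsq : Pairwise (Commute on Γsq r) :=
  fun _ _ hij => (pairwise_antiCommute_Γgen r hij).commute_tensorSq

theorem Γsq_mul_self (i : Fin (2 * r)) : Γsq r i * Γsq r i = 1 := by
  rw [Γsq, ← map_mul, Γgen_mul_self, map_one]

theorem tmul_self_prod_ofFn_Γgen {k : ℕ} {i : Fin k → Fin (2 * r)} (hi : Function.Injective i) :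
    (List.ofFn fun j => Γgen r (i j)).prod ⊗ₜ[ℂ] (List.ofFn fun j => Γgen r (i j)).prod =
      commProd (pairwise_commute_Γsq r) (Finset.univ.image i) := by
  rw [Fin.univ_image_def, ← list_prod_map_eq_commProd _ (List.nodup_ofFn.2 hi), List.map_ofFn,
    ← tensorSq_apply, map_list_prod, List.map_ofFn]
  rfl

theorem Ik_eq_factorial_smul_noncommEsymm (k : ℕ) :
    Ik r k = k.factorial • noncommEsymm (pairwise_commute_Γsq r) k := by
  have hsum := sum_injective_eq_factorial_smul_sum_powersetCard (κ := Fin k)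
    (commProd (pairwise_commute_Γsq r))
  rw [Fintype.card_fin] at hsum
  rw [Ik, noncommEsymm, ← hsum, Finset.sum_filter]
  refine Finset.sum_congr rfl fun i _ => ?_
  split_ifs with hi
  · rw [Γbr_of_injective r hi, tmul_self_prod_ofFn_Γgen r hi]
  · rw [Γbr_of_not_injective r hi, TensorProduct.zero_tmul]

end Invariants

section Chirality

variable (r : ℕ)

theorem neg_I_pow_mul_self : (-Complex.I) ^ r * (-Complex.I) ^ r = (-1) ^ r := by
  rw [← mul_pow, neg_mul_neg, Complex.I_mul_I]

theorem neg_one_pow_choose_two_two_mul {R : Type*} [Monoid R] [HasDistribNeg R] :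
    (-1 : R) ^ (2 * r).choose 2 = (-1) ^ r := by
  refine neg_one_pow_congr ?_
  rw [Nat.choose_two_right, mul_assoc, Nat.mul_div_cancel_left _ two_pos]
  cases r with
  | zero => simp
  | succ m => simp [Nat.mul_succ, parity_simps]

theorem Γtop_mul_self : Γtop r * Γtop r = 1 := by
  have hsq : (List.ofFn (Γgen r)).prod * (List.ofFn (Γgen r)).prod =
      (-1) ^ (2 * r).choose 2 := by
    rw [list_prod_mul_self_of_antiCommute, List.length_ofFn]
    · exact List.pairwise_ofFn.2 fun i j hij => pairwise_antiCommute_Γgen r hij.ne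
    · exact List.forall_mem_ofFn_iff.2 (Γgen_mul_self r)
  rw [Γtop, smul_mul_smul_comm, neg_I_pow_mul_self, hsq, neg_one_pow_choose_two_two_mul,
    Algebra.smul_def, map_pow, map_neg, map_one,
    ← pow_add, Even.neg_one_pow ⟨r, rfl⟩]

theorem Γtop_tmul_Γtop :
    Γtop r ⊗ₜ[ℂ] Γtop r = (-1 : ℂ) ^ r • commProd (pairwise_commute_Γsq r) Finset.univ := by
  have hprod := tmul_self_prod_ofFn_Γgen r Function.injective_id
  simp only [Finset.image_id, id_eq] at hprod
  rw [Γtop, TensorProduct.smul_tmul_smul, neg_I_pow_mul_self, hprod]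

theorem pCh_mul_Γtop {ε : ℂ} (hε : ε * ε = 1) : pCh r ε * Γtop r = ε • pCh r ε := by
  rw [pCh, smul_mul_assoc, smul_comm ε, add_mul, one_mul, smul_mul_assoc, Γtop_mul_self,
    smul_add ε, smul_smul ε ε, hε, one_smul, add_comm]

theorem ppCh_mul_Γtop_tmul_Γtop {ε ε' : ℂ} (hε : ε * ε = 1) (hε' : ε' * ε' = 1) :
    ppCh r ε ε' * (Γtop r ⊗ₜ[ℂ] Γtop r) = (ε * ε') • ppCh r ε ε' := by
  rw [ppCh, Algebra.TensorProduct.tmul_mul_tmul, pCh_mul_Γtop r hε, pCh_mul_Γtop r hε',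
    TensorProduct.smul_tmul_smul]

theorem ppCh_mul_commProd_univ {ε ε' : ℂ} (hε : ε * ε = 1) (hε' : ε' * ε' = 1) :
    ppCh r ε ε' * commProd (pairwise_commute_Γsq r) Finset.univ =
      ((-1) ^ r * (ε * ε')) • ppCh r ε ε' := by
  rw [mul_smul, ← ppCh_mul_Γtop_tmul_Γtop r hε hε', Γtop_tmul_Γtop, mul_smul_comm, smul_smul,
    ← pow_add, Even.neg_one_pow ⟨r, rfl⟩, one_smul]

theorem ppCh_mul_noncommEsymm {ε ε' : ℂ} (hε : ε * ε = 1) (hε' : ε' * ε' = 1) {k l : ℕ}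
    (hkl : k + l = 2 * r) :
    ppCh r ε ε' * noncommEsymm (pairwise_commute_Γsq r) l =
      ((-1) ^ r * (ε * ε')) • (ppCh r ε ε' * noncommEsymm (pairwise_commute_Γsq r) k) := by
  rw [← commProd_univ_mul_noncommEsymm (Γsq_mul_self r) (hkl.trans (Fintype.card_fin _).symm),
    ← mul_assoc, ppCh_mul_commProd_univ r hε hε', smul_mul_assoc]

end Chirality

theorem cast_factorial_add_two_eq_mul_factorial_sub_two {R : Type*} [CommRing R] {r : ℕ}
    (hr : 2 ≤ r) :
    ((r + 2).factorial : R) =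
      (r : R) * ((r : R) ^ 2 - 1) * ((r : R) + 2) * ((r - 2).factorial : R) := by
  obtain ⟨m, rfl⟩ := Nat.exists_eq_add_of_le' hr
  simp only [Nat.add_sub_cancel, Nat.factorial_succ]
  push_cast
  ring

theorem char_idens_even_r_general (r : ℕ) (hr : 2 ≤ r) (ε : ℂ) (hε : ε = 1 ∨ ε = -1) :
    ppCh r ε (-((-1) ^ r * ε)) * Ik r r = 0 ∧
    ppCh r ε ((-1) ^ r * ε) *
      (Ik r (r + 2) - ((r : ℂ) * ((r : ℂ) ^ 2 - 1) * ((r : ℂ) + 2)) • Ik r (r - 2)) = 0 := by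
  have hε2 : ε * ε = 1 := mul_self_eq_one_iff.2 hε
  have hsign : ((-1 : ℂ) ^ r * ε) * ((-1) ^ r * ε) = 1 := by
    rw [mul_mul_mul_comm, ← pow_add, Even.neg_one_pow ⟨r, rfl⟩, hε2, one_mul]
  have hscalar : (-1) ^ r * (ε * ((-1) ^ r * ε)) = 1 := by rw [← mul_assoc, hsign]
  constructor
  · have : IsAddTorsionFree (Cl r ⊗[ℂ] Cl r) := .of_isTorsionFree ℂ _
    have hself := ppCh_mul_noncommEsymm r hε2 (by rwa [neg_mul_neg]) (two_mul r).symm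
    rw [mul_neg, mul_neg, hscalar, neg_one_smul, self_eq_neg] at hself
    rw [Ik_eq_factorial_smul_noncommEsymm, mul_smul_comm, hself, smul_zero]
  · have hdual := ppCh_mul_noncommEsymm r hε2 hsign (k := r - 2) (l := r + 2) (by omega)
    rw [hscalar, one_smul] at hdual
    simp only [Ik_eq_factorial_smul_noncommEsymm, ← Nat.cast_smul_eq_nsmul ℂ]
    rw [smul_smul, ← cast_factorial_add_two_eq_mul_factorial_sub_two hr, ← smul_sub,
      mul_smul_comm, mul_sub, hdual, sub_self, smul_zero]

/-- for even `r`, the characteristic identities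
`p_{ε,−ε}·I_r = 0` and `p_{εε}·(I_{r+2} − r(r²−1)(r+2)·I_{r−2}) = 0`. -/
theorem char_idens_even_r (r : ℕ) (hr : 2 ≤ r) (hre : Even r)
    (ε : ℂ) (hε : ε = 1 ∨ ε = -1) :
    ppCh r ε (-ε) * Ik r r = 0 ∧
    ppCh r ε ε * (Ik r (r+2) - ((r:ℂ)*((r:ℂ)^2-1)*((r:ℂ)+2)) • Ik r (r-2)) = 0 := by
  simpa only [hre.neg_one_pow, one_mul] using char_idens_even_r_general r hr ε hε

end
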